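/- Let ζₖ = e^{iθₖ} with 0 ≤ θ₁ < ⋯ < θₙ < 2π be on the unit circle and bₖ > 0. The function g̃(θ) = −(i/(1+ξ̄_â)) g(e^{iθ}) is real-valued on ℝ ∖ {θ₁,…,θₙ} with derivative ∂_θ g̃(θ) = −Σₖ bₖ/(4 sin²((θₖ−θ)/2)) < 0, and g̃(θₖ⁻) = −∞, g̃(θₖ⁺) = +∞; consequently g̃ has exactly n zeros ρ₁ < ⋯ < ρₙ, and either ρₖ ∈ (θₖ, θₖ₊₁) for all k or ρₖ₊₁ ∈ (θₖ, θₖ₊₁) for all k (indices mod n). -/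

import Mathlib

open Complex

/-! On the unit circle the Cayley parameter turns each summand of `g` into a shifted cotangent:
off the poles, `g̃(x) = (Σₖ bₖ cot((x - θₖ)/2) - a) / 2`. A positive combination of cotangents is
strictly decreasing between consecutive poles and runs from `+∞` down to `-∞` there, so it takes
the value `a` exactly once on each of the `n` arcs cut out by the poles. -/

open Filter Set Topology

lemma exp_I_mul_eq_exp_I_mul_iff (x t : ℝ) :
    exp (I * x) = exp (I * t) ↔ Real.sin ((x - t) / 2) = 0 := by
  rw [← div_eq_one_iff_eq (exp_ne_zero _), ← exp_sub, ← mul_sub, ← ofReal_sub, ← sub_eq_zero,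
    ← norm_eq_zero, norm_exp_I_mul_ofReal_sub_one, norm_eq_zero, mul_eq_zero_iff_left two_ne_zero]

lemma cot_half_sub_eq_exp_ratio (z w : ℂ) :
    cot ((z - w) / 2) = (exp (I * z) + exp (I * w)) / (I * (exp (I * w) - exp (I * z))) := by
  have hw : exp (I * w) ≠ 0 := exp_ne_zero _
  have hexp : exp (2 * I * ((z - w) / 2)) = exp (I * z) / exp (I * w) := by
    rw [← exp_sub]
    congr 1
    ring
  rw [cot_eq_exp_ratio, hexp, ← mul_div_mul_right _ _ hw]
  congr 1 <;> field_simp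

lemma cayley_kernel_eq {s : ℝ} {ξ u v : ℂ} (hξ : ξ = (1 + I * s) / (1 - I * s)) (huv : u ≠ v) :
    -(I / (1 + starRingEnd ℂ ξ)) * ((u + v * starRingEnd ℂ ξ) / (v - u)) =
      ((u + v) / (I * (v - u)) - s) / 2 := by
  have hs : 1 + I * s ≠ 0 := fun h => by simpa using congrArg re h
  have hvu : v - u ≠ 0 := sub_ne_zero.2 huv.symm
  have hconj : starRingEnd ℂ ξ = (1 - I * s) / (1 + I * s) := by
    simp [hξ, sub_eq_add_neg]
  have hsum : 1 + starRingEnd ℂ ξ = 2 / (1 + I * s) := by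
    rw [hconj]
    field_simp
    ring
  rw [hsum, hconj]
  have hI := I_ne_zero
  field_simp
  linear_combination (-(u + v) - I * s * (u - v)) * I_sq

lemma cos_ne_zero_of_sin_eq_zero {x : ℝ} (hx : Real.sin x = 0) : Real.cos x ≠ 0 := fun hcos => by
  simpa [hx, hcos] using Real.sin_sq_add_cos_sq x

lemma hasDerivAt_cot {x : ℝ} (hx : Real.sin x ≠ 0) :
    HasDerivAt Real.cot (-(1 / Real.sin x ^ 2)) x := by
  have hcot : Real.cot = Real.cos / Real.sin := funext Real.cot_eq_cos_div_sin
  rw [hcot]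
  refine ((Real.hasDerivAt_cos x).div (Real.hasDerivAt_sin x) hx).congr_deriv ?_
  rw [← neg_div]
  congr 1
  linear_combination -Real.sin_sq_add_cos_sq x

lemma tendsto_nhdsGT_of_strictMono {α β : Type*} [TopologicalSpace α] [Preorder α]
    [TopologicalSpace β] [Preorder β] {f : α → β} (hf : StrictMono f) (hcont : Continuous f)
    (x : α) : Tendsto f (𝓝[>] x) (𝓝[>] f x) :=
  hcont.continuousWithinAt.tendsto_nhdsWithin fun _ hy => hf hy

-- `cot y * (y - x) = cos y / slope sin x y`, which tends to `1` as `y → x`.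
lemma tendsto_cot_nhdsGT {x : ℝ} (hx : Real.sin x = 0) : Tendsto Real.cot (𝓝[>] x) atTop := by
  have hcos : Real.cos x ≠ 0 := cos_ne_zero_of_sin_eq_zero hx
  have hslope : Tendsto (slope Real.sin x) (𝓝[>] x) (𝓝 (Real.cos x)) :=
    (Real.hasDerivAt_sin x).tendsto_slope.mono_left (nhdsGT_le_nhdsNE x)
  have hratio : Tendsto (fun y => Real.cos y / slope Real.sin x y) (𝓝[>] x) (𝓝 1) := by
    rw [← div_self hcos]
    exact (Real.continuous_cos.continuousWithinAt.tendsto).div hslope hcos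
  have hsub : Tendsto (fun y => y - x) (𝓝[>] x) (𝓝[>] 0) := by
    simpa only [sub_self] using
      tendsto_nhdsGT_of_strictMono (fun _ _ h => sub_lt_sub_right h x) (by fun_prop) x
  refine (hratio.pos_mul_atTop one_pos (tendsto_inv_nhdsGT_zero.comp hsub)).congr' ?_
  filter_upwards [self_mem_nhdsWithin] with y hy
  have hyx : y - x ≠ 0 := sub_ne_zero.2 (ne_of_gt hy)
  rw [Function.comp_apply, slope_def_field, hx, sub_zero, Real.cot_eq_cos_div_sin]
  field_simp

lemma tendsto_half_sub_nhdsGT (x t : ℝ) :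
    Tendsto (fun y => (y - t) / 2) (𝓝[>] x) (𝓝[>] ((x - t) / 2)) :=
  tendsto_nhdsGT_of_strictMono (fun _ _ h => by linarith) (by fun_prop) x

lemma tendsto_sum_atTop_of_isBoundedUnder {ι α R : Type*} [Fintype ι] [AddCommGroup R]
    [PartialOrder R] [IsOrderedAddMonoid R] {l : Filter α} {f : ι → α → R} {k : ι}
    (hk : Tendsto (f k) l atTop) (hf : ∀ j ≠ k, IsBoundedUnder (· ≥ ·) l (f j)) :
    Tendsto (fun y => ∑ j, f j y) l atTop := by
  classical
  obtain ⟨C, hC⟩ :=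
    isBoundedUnder_ge_sum (Finset.univ.erase k) fun j hj => hf j (Finset.ne_of_mem_erase hj)
  simp only [eventually_map, Finset.sum_apply] at hC
  refine (tendsto_atTop_add_right_of_le' l C hk hC).congr fun y => ?_
  exact Finset.add_sum_erase _ (fun j => f j y) (Finset.mem_univ k)

lemma exists_castSucc_le_lt_succ {α : Type*} [LinearOrder α] {n : ℕ} {f : Fin (n + 1) → α} {x : α}
    (h₀ : f 0 ≤ x) (h₁ : x < f (Fin.last n)) : ∃ k : Fin n, f k.castSucc ≤ x ∧ x < f k.succ := by
  by_contra! h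
  exact (Fin.induction (motive := fun i => f i ≤ x) h₀ h (Fin.last n)).not_gt h₁

lemma strictMono_of_mem_Ioo_castSucc_succ {α : Type*} [Preorder α] {n : ℕ} {f : Fin (n + 1) → α}
    {ρ : Fin n → α} (hf : Monotone f) (hρ : ∀ k, ρ k ∈ Ioo (f k.castSucc) (f k.succ)) :
    StrictMono ρ := fun i j hij =>
  (hρ i).2.trans_le ((hf (Fin.succ_le_castSucc_iff.2 hij)).trans (hρ j).1.le)

lemma ne_of_mem_Ioo_castSucc_succ {α : Type*} [LinearOrder α] {n : ℕ} {f : Fin (n + 1) → α} {x : α}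
    (hf : Monotone f) {k : Fin n} (hx : x ∈ Ioo (f k.castSucc) (f k.succ)) (i : Fin (n + 1)) :
    x ≠ f i := by
  rintro rfl
  exact (hf.reflect_lt hx.2).not_ge (Fin.castSucc_lt_iff_succ_le.1 (hf.reflect_lt hx.1))

section CotSum

variable {ι : Type*}

/-- The arguments `x` for which `e^{ix}` is none of the points `e^{iθₖ}`. The condition is phrased
through the denominators `sin((x - θₖ)/2)` of the cotangents in `cotSum`. -/
def regularPoints (θ : ι → ℝ) : Set ℝ :=
  {x | ∀ k, Real.sin ((x - θ k) / 2) ≠ 0}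

lemma mem_regularPoints_iff_forall_exp_ne {θ : ι → ℝ} {x : ℝ} :
    x ∈ regularPoints θ ↔ ∀ k, exp (I * x) ≠ exp (I * θ k) :=
  forall_congr' fun k => (exp_I_mul_eq_exp_I_mul_iff x (θ k)).not.symm

lemma apply_notMem_regularPoints (θ : ι → ℝ) (k : ι) : θ k ∉ regularPoints θ :=
  fun h => h k (by simp)

lemma neg_mem_regularPoints_neg {θ : ι → ℝ} {x : ℝ} :
    -x ∈ regularPoints (-θ) ↔ x ∈ regularPoints θ :=
  forall_congr' fun k => by
    rw [Pi.neg_apply, show (-x - -θ k) / 2 = -((x - θ k) / 2) by ring, Real.sin_neg, neg_ne_zero]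

lemma hasDerivAt_half_sub (x t : ℝ) : HasDerivAt (fun y => (y - t) / 2) (1 / 2) x :=
  ((hasDerivAt_id x).sub_const t).div_const 2

lemma eventually_mem_regularPoints [Finite ι] (θ : ι → ℝ) (x : ℝ) :
    ∀ᶠ y in 𝓝[≠] x, y ∈ regularPoints θ := by
  refine eventually_all.2 fun k => ?_
  have hderiv := (hasDerivAt_half_sub x (θ k)).sin
  by_cases hx : Real.sin ((x - θ k) / 2) = 0
  · have hcos : Real.cos ((x - θ k) / 2) ≠ 0 := cos_ne_zero_of_sin_eq_zero hx
    exact hderiv.eventually_ne (mul_ne_zero hcos (by norm_num))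
  · exact (hderiv.continuousAt.eventually_ne hx).filter_mono nhdsWithin_le_nhds

lemma eventuallyEq_nhdsNE_of_eqOn_regularPoints [Finite ι] {β : Type*} {θ : ι → ℝ} {f g : ℝ → β}
    (hf : EqOn f g (regularPoints θ)) (x : ℝ) : f =ᶠ[𝓝[≠] x] g :=
  (eventually_mem_regularPoints θ x).mono fun _ hy => hf hy

variable [Fintype ι]

/-- The cotangent sum `x ↦ Σₖ bₖ cot((x - θₖ)/2)`, the real form of the rational function `g` on
the unit circle. At a pole `θₖ + 2πℤ` the `k`-th summand has the junk value `0`. -/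
noncomputable def cotSum (θ b : ι → ℝ) (x : ℝ) : ℝ :=
  ∑ k, b k * Real.cot ((x - θ k) / 2)

variable {θ b : ι → ℝ} {x : ℝ}

lemma cayley_sum_eq_cotSum {s : ℝ} {ξ : ℂ} (hξ : ξ = (1 + I * s) / (1 - I * s))
    (hx : x ∈ regularPoints θ) :
    -(I / (1 + starRingEnd ℂ ξ)) *
        ∑ k, (b k : ℂ) * (exp (I * x) + exp (I * θ k) * starRingEnd ℂ ξ) /
          (exp (I * θ k) - exp (I * x)) =
      (((cotSum θ b x - s * ∑ k, b k) / 2 : ℝ) : ℂ) := by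
  rw [cotSum, Finset.mul_sum Finset.univ b, ← Finset.sum_sub_distrib, Finset.sum_div,
    Finset.mul_sum, ofReal_sum]
  refine Finset.sum_congr rfl fun k _ => ?_
  have hne : exp (I * x) ≠ exp (I * θ k) := mem_regularPoints_iff_forall_exp_ne.1 hx k
  rw [mul_div_assoc, mul_left_comm, cayley_kernel_eq hξ hne, ← cot_half_sub_eq_exp_ratio]
  push_cast
  ring

lemma cotSum_neg (θ b : ι → ℝ) (x : ℝ) : cotSum (-θ) b (-x) = -cotSum θ b x := by
  rw [cotSum, cotSum, ← Finset.sum_neg_distrib]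
  refine Finset.sum_congr rfl fun k _ => ?_
  rw [Pi.neg_apply, show (-x - -θ k) / 2 = -((x - θ k) / 2) by ring]
  simp only [Real.cot_eq_cos_div_sin, Real.cos_neg, Real.sin_neg, div_neg, mul_neg]

lemma hasDerivAt_cotSum (hx : x ∈ regularPoints θ) :
    HasDerivAt (cotSum θ b) (-∑ k, b k / (2 * Real.sin ((x - θ k) / 2) ^ 2)) x := by
  rw [← Finset.sum_neg_distrib]
  refine HasDerivAt.fun_sum fun k _ => ?_
  refine (((hasDerivAt_cot (hx k)).comp x (hasDerivAt_half_sub x (θ k))).const_mul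
    (b k)).congr_deriv ?_
  ring

lemma continuousOn_cotSum : ContinuousOn (cotSum θ b) (regularPoints θ) :=
  fun _ hx => (hasDerivAt_cotSum hx).continuousAt.continuousWithinAt

lemma strictAntiOn_cotSum [Nonempty ι] (hb : ∀ k, 0 < b k) {s : Set ℝ} (hs : Convex ℝ s)
    (hreg : s ⊆ regularPoints θ) : StrictAntiOn (cotSum θ b) s := by
  refine strictAntiOn_of_hasDerivWithinAt_neg hs (continuousOn_cotSum.mono hreg)
    (fun x hx => (hasDerivAt_cotSum (hreg (interior_subset hx))).hasDerivWithinAt) fun x hx => ?_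
  refine neg_lt_zero.2 (Finset.sum_pos (fun k _ => div_pos (hb k) ?_) Finset.univ_nonempty)
  have hk := hreg (interior_subset hx) k
  positivity

lemma tendsto_cotSum_nhdsGT (hb : ∀ k, 0 < b k) (hx : x ∉ regularPoints θ) :
    Tendsto (cotSum θ b) (𝓝[>] x) atTop := by
  have hpole {k : ι} (hk : Real.sin ((x - θ k) / 2) = 0) :
      Tendsto (fun y => b k * Real.cot ((y - θ k) / 2)) (𝓝[>] x) atTop :=
    ((tendsto_cot_nhdsGT hk).comp (tendsto_half_sub_nhdsGT x (θ k))).const_mul_atTop (hb k)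
  obtain ⟨k, hk⟩ : ∃ k, Real.sin ((x - θ k) / 2) = 0 := by simpa [regularPoints] using hx
  refine tendsto_sum_atTop_of_isBoundedUnder (hpole hk) fun j _ => ?_
  by_cases hj : Real.sin ((x - θ j) / 2) = 0
  · exact (hpole hj).isBoundedUnder_ge_atTop
  · have hcont := ((hasDerivAt_cot hj).comp x (hasDerivAt_half_sub x (θ j))).continuousAt
    exact ((hcont.tendsto.mono_left nhdsWithin_le_nhds).const_mul (b j)).isBoundedUnder_ge

lemma tendsto_cotSum_nhdsLT (hb : ∀ k, 0 < b k) (hx : x ∉ regularPoints θ) :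
    Tendsto (cotSum θ b) (𝓝[<] x) atBot := by
  have hneg := tendsto_cotSum_nhdsGT hb (mt neg_mem_regularPoints_neg.1 hx)
  refine (tendsto_neg_atTop_atBot.comp (hneg.comp tendsto_neg_nhdsLT)).congr fun y => ?_
  simp only [Function.comp_apply, cotSum_neg, neg_neg]

lemma existsUnique_mem_Ioo_cotSum_eq (hb : ∀ k, 0 < b k) {p q : ℝ} (hpq : p < q)
    (hp : p ∉ regularPoints θ) (hq : q ∉ regularPoints θ) (hreg : Ioo p q ⊆ regularPoints θ)
    (c : ℝ) : ∃! x, x ∈ Ioo p q ∧ cotSum θ b x = c := by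
  have : Nonempty ι := not_isEmpty_iff.1 fun _ => hp isEmptyElim
  have := nhdsGT_neBot_of_exists_gt ⟨q, hpq⟩
  obtain ⟨x, hx, hxc⟩ := isPreconnected_Ioo.intermediate_value_Iii
    (le_principal_iff.2 (Ioo_mem_nhdsLT hpq)) (le_principal_iff.2 (Ioo_mem_nhdsGT hpq))
    (continuousOn_cotSum.mono hreg) (tendsto_cotSum_nhdsLT hb hq) (tendsto_cotSum_nhdsGT hb hp)
    (mem_univ c)
  have hanti := strictAntiOn_cotSum hb (convex_Ioo p q) hreg
  exact ⟨x, ⟨hx, hxc⟩, fun y hy => hanti.injOn hy.1 hx (hy.2.trans hxc.symm)⟩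

section EqOn

variable {f : ℝ → ℝ} {c : ℝ}

lemma hasDerivAt_of_eqOn_regularPoints
    (hf : EqOn f (fun y => (cotSum θ b y - c) / 2) (regularPoints θ)) (hx : x ∈ regularPoints θ) :
    HasDerivAt f (-∑ k, b k / (4 * Real.sin ((θ k - x) / 2) ^ 2)) x := by
  have hcotSum := ((hasDerivAt_cotSum (b := b) hx).sub_const c).div_const 2
  refine (hcotSum.congr_of_eventuallyEq (eventuallyEq_nhds_of_eventuallyEq_nhdsNE
    (eventuallyEq_nhdsNE_of_eqOn_regularPoints hf x) (hf hx))).congr_deriv ?_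
  rw [neg_div, Finset.sum_div]
  congr! 2 with k
  rw [show (θ k - x) / 2 = -((x - θ k) / 2) by ring, Real.sin_neg]
  ring

lemma tendsto_nhdsLT_of_eqOn_regularPoints
    (hf : EqOn f (fun y => (cotSum θ b y - c) / 2) (regularPoints θ)) (hb : ∀ k, 0 < b k)
    (hx : x ∉ regularPoints θ) : Tendsto f (𝓝[<] x) atBot :=
  ((tendsto_atBot_add_const_right _ (-c) (tendsto_cotSum_nhdsLT hb hx)).atBot_div_const
    two_pos).congr' (((eventuallyEq_nhdsNE_of_eqOn_regularPoints hf x).filter_mono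
      (nhdsLT_le_nhdsNE x)).symm)

lemma tendsto_nhdsGT_of_eqOn_regularPoints
    (hf : EqOn f (fun y => (cotSum θ b y - c) / 2) (regularPoints θ)) (hb : ∀ k, 0 < b k)
    (hx : x ∉ regularPoints θ) : Tendsto f (𝓝[>] x) atTop :=
  ((tendsto_atTop_add_const_right _ (-c) (tendsto_cotSum_nhdsGT hb hx)).atTop_div_const
    two_pos).congr' (((eventuallyEq_nhdsNE_of_eqOn_regularPoints hf x).filter_mono
      (nhdsGT_le_nhdsNE x)).symm)

lemma eq_zero_iff_of_eqOn_regularPoints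
    (hf : EqOn f (fun y => (cotSum θ b y - c) / 2) (regularPoints θ)) (hx : x ∈ regularPoints θ) :
    f x = 0 ↔ cotSum θ b x = c := by
  rw [hf hx, div_eq_zero_iff, or_iff_left two_ne_zero, sub_eq_zero]

end EqOn

end CotSum

section Arcs

variable {m : ℕ} {θ : Fin (m + 1) → ℝ}

/-- The poles met in one turn around the circle: `θ₀, …, θₘ`, followed by the return
`θ₀ + 2π` to the first one. Consecutive entries bound the `m + 1` arcs between poles. -/
noncomputable def turn (θ : Fin (m + 1) → ℝ) : Fin (m + 2) → ℝ :=
  Fin.snoc (α := fun _ => ℝ) θ (θ 0 + 2 * Real.pi)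

/-- The open arc from the `k`-th pole to the next one in cyclic order, lifted to the real line. -/
def arc (θ : Fin (m + 1) → ℝ) (k : Fin (m + 1)) : Set ℝ :=
  Ioo (turn θ k.castSucc) (turn θ k.succ)

lemma turn_castSucc (θ : Fin (m + 1) → ℝ) (k : Fin (m + 1)) : turn θ k.castSucc = θ k :=
  Fin.snoc_castSucc (α := fun _ => ℝ) _ _ k

lemma turn_zero (θ : Fin (m + 1) → ℝ) : turn θ 0 = θ 0 :=
  turn_castSucc θ 0

lemma turn_last (θ : Fin (m + 1) → ℝ) : turn θ (Fin.last (m + 1)) = θ 0 + 2 * Real.pi :=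
  Fin.snoc_last (α := fun _ => ℝ) _ _

lemma arc_of_lt (θ : Fin (m + 1) → ℝ) {k : Fin (m + 1)} (hk : (k : ℕ) + 1 < m + 1) :
    arc θ k = Ioo (θ k) (θ ⟨k + 1, hk⟩) := by
  rw [arc, turn_castSucc, show k.succ = Fin.castSucc ⟨k + 1, hk⟩ from rfl, turn_castSucc]

lemma arc_last (θ : Fin (m + 1) → ℝ) :
    arc θ (Fin.last m) = Ioo (θ (Fin.last m)) (θ 0 + 2 * Real.pi) := by
  rw [arc, turn_castSucc, Fin.succ_last, turn_last]

lemma strictMono_turn (hθ : StrictMono θ) (hspan : θ (Fin.last m) < θ 0 + 2 * Real.pi) :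
    StrictMono (turn θ) := by
  simpa only [turn, Fin.insertNth_last'] using Fin.strictMono_insertNth_last hθ _ hspan

lemma turn_notMem_regularPoints (θ : Fin (m + 1) → ℝ) (i : Fin (m + 2)) :
    turn θ i ∉ regularPoints θ := by
  induction i using Fin.lastCases with
  | last => exact fun h => h 0 (by simp [turn_last])
  | cast k => exact turn_castSucc θ k ▸ apply_notMem_regularPoints θ k

lemma arc_subset_regularPoints (hθ : StrictMono θ) (hspan : θ (Fin.last m) < θ 0 + 2 * Real.pi)
    (k : Fin (m + 1)) : arc θ k ⊆ regularPoints θ := by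
  intro x hx j
  have hturn := (strictMono_turn hθ hspan).monotone
  have hxj : x ≠ θ j := turn_castSucc θ j ▸ ne_of_mem_Ioo_castSucc_succ hturn hx j.castSucc
  have hlow : θ 0 < x := turn_zero θ ▸ (hturn (Fin.zero_le _)).trans_lt hx.1
  have hupp : x < θ 0 + 2 * Real.pi := turn_last θ ▸ hx.2.trans_le (hturn (Fin.le_last _))
  have hj₀ : θ 0 ≤ θ j := hθ.monotone (Fin.zero_le j)
  have hj₁ : θ j ≤ θ (Fin.last m) := hθ.monotone (Fin.le_last j)
  rw [Ne, Real.sin_eq_zero_iff_of_lt_of_lt (by linarith) (by linarith)]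
  exact div_ne_zero (sub_ne_zero.2 hxj) two_ne_zero

lemma exists_mem_arc {x : ℝ} (h₀ : θ 0 ≤ x) (h₁ : x < θ 0 + 2 * Real.pi)
    (hx : x ∈ regularPoints θ) : ∃ k, x ∈ arc θ k := by
  obtain ⟨k, hk, hk'⟩ := exists_castSucc_le_lt_succ ((turn_zero θ).trans_le h₀)
    (h₁.trans_eq (turn_last θ).symm)
  exact ⟨k, hk.lt_of_ne fun h => turn_notMem_regularPoints θ _ (h ▸ hx), hk'⟩

lemma existsUnique_mem_arc_cotSum_eq {b : Fin (m + 1) → ℝ} (hθ : StrictMono θ)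
    (hspan : θ (Fin.last m) < θ 0 + 2 * Real.pi) (hb : ∀ k, 0 < b k) (c : ℝ) (k : Fin (m + 1)) :
    ∃! x, x ∈ arc θ k ∧ cotSum θ b x = c :=
  existsUnique_mem_Ioo_cotSum_eq hb (strictMono_turn hθ hspan k.castSucc_lt_succ)
    (turn_notMem_regularPoints θ _) (turn_notMem_regularPoints θ _)
    (arc_subset_regularPoints hθ hspan k) c

lemma exists_strictMono_cotSum_eq {b : Fin (m + 1) → ℝ} (hθ : StrictMono θ)
    (hspan : θ (Fin.last m) < θ 0 + 2 * Real.pi) (hb : ∀ k, 0 < b k) (c : ℝ) :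
    ∃ ρ : Fin (m + 1) → ℝ, StrictMono ρ ∧ (∀ k, ρ k ∈ arc θ k ∧ cotSum θ b (ρ k) = c) ∧
      ∀ x ∈ regularPoints θ, θ 0 ≤ x → x < θ 0 + 2 * Real.pi → cotSum θ b x = c →
        ∃ k, x = ρ k := by
  choose ρ hρ huniq using existsUnique_mem_arc_cotSum_eq hθ hspan hb c
  refine ⟨ρ, strictMono_of_mem_Ioo_castSucc_succ (strictMono_turn hθ hspan).monotone
    fun k => (hρ k).1, hρ, fun x hx h₀ h₁ hxc => ?_⟩
  obtain ⟨k, hk⟩ := exists_mem_arc h₀ h₁ hx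
  exact ⟨k, huniq k x ⟨hk, hxc⟩⟩

end Arcs

/-- the function g̃(θ) = −(i/(1+ξ̄_â))·g(e^{iθ}) is real-valued off the θₖ,
has derivative −Σₖ bₖ/(4 sin²((θₖ−θ)/2)) < 0, tends to −∞ and +∞ at θₖ⁻ and θₖ⁺,
and has exactly n zeros ρ₁ < ⋯ < ρₙ interlacing the θₖ in one of the two possible ways. -/
theorem stmt_5 (n : ℕ) (hn : 0 < n) (θk : Fin n → ℝ)
    (hθ : StrictMono θk) (hθ0 : 0 ≤ θk ⟨0, hn⟩) (hθlt : ∀ k, θk k < 2 * Real.pi)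
    (b : Fin n → ℝ) (hb : ∀ k, 0 < b k) (a : ℝ)
    (ζ : Fin n → ℂ) (hζ : ∀ k, ζ k = Complex.exp (I * θk k))
    (ξa : ℂ) (hξa : ξa = (1 + I * ((a / ∑ k, b k : ℝ) : ℂ)) / (1 - I * ((a / ∑ k, b k : ℝ) : ℂ)))
    (g : ℂ → ℂ)
    (hg : ∀ z, g z = ∑ k, (b k : ℂ) * (z + ζ k * (starRingEnd ℂ) ξa) / (ζ k - z))
    (gt : ℝ → ℂ)
    (hgt : ∀ x : ℝ, gt x = -(I / (1 + (starRingEnd ℂ) ξa)) * g (Complex.exp (I * x))) :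
    (∀ x : ℝ, (∀ k, Complex.exp (I * x) ≠ ζ k) → (gt x).im = 0) ∧
    (∀ x : ℝ, (∀ k, Complex.exp (I * x) ≠ ζ k) →
      HasDerivAt (fun y => (gt y).re)
        (-∑ k, b k / (4 * Real.sin ((θk k - x) / 2) ^ 2)) x) ∧
    (∀ k : Fin n,
      Filter.Tendsto (fun y => (gt y).re) (nhdsWithin (θk k) (Set.Iio (θk k))) Filter.atBot ∧
      Filter.Tendsto (fun y => (gt y).re) (nhdsWithin (θk k) (Set.Ioi (θk k))) Filter.atTop) ∧
    (∃ ρs : Fin n → ℝ, StrictMono ρs ∧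
      (∀ k, (gt (ρs k)).re = 0 ∧ ∀ j, Complex.exp (I * ρs k) ≠ ζ j) ∧
      (∀ x : ℝ, θk ⟨0, hn⟩ ≤ x → x < θk ⟨0, hn⟩ + 2 * Real.pi →
        (∀ k, Complex.exp (I * x) ≠ ζ k) → (gt x).re = 0 →
        ∃ k : Fin n, ∃ m : ℤ, x = ρs k + 2 * Real.pi * m) ∧
      ((∀ k : Fin n, ∀ hk : (k : ℕ) + 1 < n,
          θk k < ρs k ∧ ρs k < θk ⟨(k : ℕ) + 1, hk⟩) ∧
        θk ⟨n - 1, by omega⟩ < ρs ⟨n - 1, by omega⟩ ∧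
        ρs ⟨n - 1, by omega⟩ < θk ⟨0, hn⟩ + 2 * Real.pi ∨
       (∀ k : Fin n, ∀ hk : (k : ℕ) + 1 < n,
          θk k < ρs ⟨(k : ℕ) + 1, hk⟩ ∧ ρs ⟨(k : ℕ) + 1, hk⟩ < θk ⟨(k : ℕ) + 1, hk⟩) ∧
        θk ⟨n - 1, by omega⟩ - 2 * Real.pi < ρs ⟨0, hn⟩ ∧ ρs ⟨0, hn⟩ < θk ⟨0, hn⟩)) := by
  obtain _ | m := n
  · exact absurd hn (lt_irrefl 0)
  obtain rfl : ζ = fun k => exp (I * θk k) := funext hζ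
  have hspan : θk (Fin.last m) < θk 0 + 2 * Real.pi :=
    (hθlt _).trans_le (le_add_of_nonneg_left hθ0)
  set c := a / (∑ k, b k) * ∑ k, b k
  have hgt_eq {x : ℝ} (hx : x ∈ regularPoints θk) : gt x = ((cotSum θk b x - c) / 2 : ℝ) := by
    rw [hgt, hg, cayley_sum_eq_cotSum hξa hx]
  have hre : EqOn (fun x => (gt x).re) (fun x => (cotSum θk b x - c) / 2) (regularPoints θk) :=
    fun x hx => congrArg re (hgt_eq hx)
  obtain ⟨ρ, hmono, hρ, hall⟩ := exists_strictMono_cotSum_eq hθ hspan hb c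
  have hρreg (k) : ρ k ∈ regularPoints θk := arc_subset_regularPoints hθ hspan k (hρ k).1
  simp only [← mem_regularPoints_iff_forall_exp_ne]
  refine ⟨fun x hx => congrArg im (hgt_eq hx), fun x hx => hasDerivAt_of_eqOn_regularPoints hre hx,
    fun k => ⟨tendsto_nhdsLT_of_eqOn_regularPoints hre hb (apply_notMem_regularPoints θk k),
      tendsto_nhdsGT_of_eqOn_regularPoints hre hb (apply_notMem_regularPoints θk k)⟩,
    ρ, hmono, fun k => ⟨(eq_zero_iff_of_eqOn_regularPoints hre (hρreg k)).2 (hρ k).2, hρreg k⟩,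
    fun x h₀ h₁ hx hzero => ?_,
    Or.inl ⟨fun k hk => (arc_of_lt θk hk).subset (hρ k).1,
      (arc_last θk).subset (hρ (Fin.last m)).1⟩⟩
  obtain ⟨k, hk⟩ := hall x hx h₀ h₁ ((eq_zero_iff_of_eqOn_regularPoints hre hx).1 hzero)
  exact ⟨k, 0, by simpa using hk⟩
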